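/- arXiv:1302.3784 — 4 statements merged into one kernel-verified Lean document; each statement's English description precedes it below -/
import Mathlib

section
/- Closed form of the dual function via greedy primal updates: suppose every 𝒰_m and every 𝒰_p is nonempty, and let (λ, μ, β, α) be nonnegative multipliers with λ_u > 0 for all u. Then D(λ, μ, β, α) := sup { L(x, y^A, y^{nA}, A, N, R) : (x, y^A, y^{nA}, A, N) ∈ Π, R_u > 0 } is finite and equals Σ_{u∈𝒰} (w_u ln(w_u/λ_u) − w_u) + Σ_{m∈ℳ} [ N_sf·max(0, β_m − Σ_{p : m∈I_p} μ_{p,m}) + N_sf·max(0, max_{u∈𝒰_m}(λ_u r_u^macro − β_m)) ] + Σ_{p∈𝒫} [ N_sf·max(0, β_p − Σ_{m∈I_p} μ_{p,m}) + N_sf·max(0, max_{u∈𝒰_p}(λ_u r_u^{pico,ABS} − β_p − α_p)) + N_sf·max(0, max_{u∈𝒰_p}(λ_u r_u^{pico} − α_p)) ] + N_sf (Σ_{p∈𝒫} Σ_{m∈I_p} μ_{p,m} + Σ_{p∈𝒫} α_p). -/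
open Finset

/-- The Lagrangian of the RELAXED-ABS problem. -/
noncomputable def Lag {U M P : Type*} [Fintype U] [Fintype M] [Fintype P]
    [DecidableEq M] [DecidableEq P]
    (mu : U → M) (pu : U → P) (rMac rPicoABS rPico w : U → ℝ)
    (Ip : P → Finset M) (Nsf : ℕ)
    (x yA ynA R : U → ℝ) (A : P → ℝ) (N : M → ℝ)
    (lam : U → ℝ) (μ : P → M → ℝ) (βM : M → ℝ) (βP αP : P → ℝ) : ℝ :=
  ∑ u, w u * Real.log (R u)
    - ∑ u, lam u * (R u - rMac u * x u - rPicoABS u * yA u - rPico u * ynA u)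
    - ∑ p, ∑ m ∈ Ip p, μ p m * (A p + N m - (Nsf : ℝ))
    - ∑ m, βM m * ((∑ u ∈ univ.filter (fun u => mu u = m), x u) - N m)
    - ∑ p, βP p * ((∑ u ∈ univ.filter (fun u => pu u = p), yA u) - A p)
    - ∑ p, αP p * ((∑ u ∈ univ.filter (fun u => pu u = p), (yA u + ynA u)) - (Nsf : ℝ))

/-- Membership in the compact region `Π` over which the dual function is defined. -/
def InPi {U M P : Type*} [Fintype U] [Fintype M] [Fintype P]
    [DecidableEq M] [DecidableEq P]
    (mu : U → M) (pu : U → P) (Nsf : ℕ)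
    (x yA ynA : U → ℝ) (A : P → ℝ) (N : M → ℝ) : Prop :=
  (∀ u, 0 ≤ x u) ∧ (∀ u, 0 ≤ yA u) ∧ (∀ u, 0 ≤ ynA u) ∧
  (∀ p, 0 ≤ A p) ∧ (∀ m, 0 ≤ N m) ∧
  (∀ p, A p ≤ (Nsf : ℝ)) ∧ (∀ m, N m ≤ (Nsf : ℝ)) ∧
  (∀ m, ∑ u ∈ univ.filter (fun u => mu u = m), x u ≤ (Nsf : ℝ)) ∧
  (∀ p, ∑ u ∈ univ.filter (fun u => pu u = p), yA u ≤ (Nsf : ℝ)) ∧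
  (∀ p, ∑ u ∈ univ.filter (fun u => pu u = p), ynA u ≤ (Nsf : ℝ))

lemma aux_greedy_le {U : Type*} (s : Finset U) (hs : s.Nonempty) (f x : U → ℝ) (n : ℝ)
    (hx : ∀ u, 0 ≤ x u) (hsum : ∑ u ∈ s, x u ≤ n) :
    ∑ u ∈ s, f u * x u ≤ n * max 0 (s.sup' hs f) := by
  have h0 : (0 : ℝ) ≤ max 0 (s.sup' hs f) := le_max_left _ _
  calc ∑ u ∈ s, f u * x u ≤ ∑ u ∈ s, max 0 (s.sup' hs f) * x u :=
        Finset.sum_le_sum fun u hu => mul_le_mul_of_nonneg_right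
          ((Finset.le_sup' f hu).trans (le_max_right _ _)) (hx u)
    _ = (∑ u ∈ s, x u) * max 0 (s.sup' hs f) := by rw [← Finset.mul_sum, mul_comm]
    _ ≤ _ := mul_le_mul_of_nonneg_right hsum h0

lemma aux_greedy_eq {U M : Type*} [Fintype U] [DecidableEq M] (g : U → M)
    (h : ∀ m : M, (univ.filter (fun u => g u = m)).Nonempty) (f : M → U → ℝ) (n : ℝ)
    (hn : 0 ≤ n) :
    ∃ x : U → ℝ, (∀ u, 0 ≤ x u) ∧
      (∀ m, ∑ u ∈ univ.filter (fun u => g u = m), x u ≤ n) ∧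
      (∀ m, ∑ u ∈ univ.filter (fun u => g u = m), f m u * x u
        = n * max 0 ((univ.filter (fun u => g u = m)).sup' (h m) (f m))) := by
  classical
  choose v hv hv2 using fun m => Finset.exists_mem_eq_sup' (h m) (f m)
  have key : ∀ m, ∀ u ∈ univ.filter (fun u => g u = m),
      (if u = v (g u) ∧ 0 < f (g u) u then n else 0)
        = if u = v m then (if 0 < f m (v m) then n else 0) else 0 := by
    intro m u hu
    have hgu : g u = m := by simpa using hu
    rw [hgu]
    by_cases h1 : u = v m
    · rw [← h1]; simp
    · simp [h1]
  refine ⟨fun u => if u = v (g u) ∧ 0 < f (g u) u then n else 0, ?_, ?_, ?_⟩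
  · intro u
    dsimp only
    split_ifs <;> simp [hn]
  · intro m
    rw [Finset.sum_congr rfl (key m), Finset.sum_ite_eq', if_pos (hv m)]
    split_ifs <;> simp [hn]
  · intro m
    rw [Finset.sum_congr rfl (fun u hu => congrArg (f m u * ·) (key m u hu))]
    simp only [mul_ite, mul_zero]
    rw [Finset.sum_ite_eq', if_pos (hv m), hv2 m]
    split_ifs with h1
    · rw [max_eq_right h1.le, mul_comm]
    · rw [max_eq_left (not_lt.mp h1), mul_zero]

lemma aux_box_le (a t n : ℝ) (h0 : 0 ≤ t) (h1 : t ≤ n) : a * t ≤ n * max 0 a := by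
  have h2 := mul_le_mul_of_nonneg_right (le_max_right 0 a) h0
  have h3 := mul_le_mul_of_nonneg_right h1 (le_max_left 0 a)
  linarith [mul_comm t (max 0 a)]

lemma aux_box_eq (a n : ℝ) : a * (if 0 < a then n else 0) = n * max 0 a := by
  split_ifs with h1
  · rw [max_eq_right h1.le, mul_comm]
  · rw [max_eq_left (not_lt.mp h1), mul_zero, mul_zero]

lemma aux_log_le (w l R : ℝ) (hw : 0 < w) (hl : 0 < l) (hR : 0 < R) :
    w * Real.log R - l * R ≤ w * Real.log (w / l) - w := by
  have h1 := Real.log_le_sub_one_of_pos (show 0 < R / (w / l) by positivity)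
  rw [Real.log_div hR.ne' (by positivity)] at h1
  have h2 := mul_le_mul_of_nonneg_left h1 hw.le
  have h3 : w * (R / (w / l) - 1) = l * R - w := by field_simp
  linarith

lemma aux_Lag_eq {U M P : Type*} [Fintype U] [Fintype M] [Fintype P]
    [DecidableEq M] [DecidableEq P]
    (mu : U → M) (pu : U → P) (rMac rPicoABS rPico w : U → ℝ)
    (Ip : P → Finset M) (Nsf : ℕ)
    (x yA ynA R : U → ℝ) (A : P → ℝ) (N : M → ℝ)
    (lam : U → ℝ) (μ : P → M → ℝ) (βM : M → ℝ) (βP αP : P → ℝ) :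
    Lag mu pu rMac rPicoABS rPico w Ip Nsf x yA ynA R A N lam μ βM βP αP =
      (∑ u, (w u * Real.log (R u) - lam u * R u))
      + (∑ m, ((βM m - ∑ p ∈ univ.filter (fun p => m ∈ Ip p), μ p m) * N m
          + ∑ u ∈ univ.filter (fun u => mu u = m), (lam u * rMac u - βM m) * x u))
      + (∑ p, ((βP p - ∑ m ∈ Ip p, μ p m) * A p
          + ∑ u ∈ univ.filter (fun u => pu u = p), (lam u * rPicoABS u - βP p - αP p) * yA u
          + ∑ u ∈ univ.filter (fun u => pu u = p), (lam u * rPico u - αP p) * ynA u))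
      + (Nsf : ℝ) * ((∑ p, ∑ m ∈ Ip p, μ p m) + ∑ p, αP p) := by
  have e1 := Finset.sum_fiberwise univ mu (fun u => lam u * rMac u * x u)
  have e2 := Finset.sum_fiberwise univ pu (fun u => lam u * rPicoABS u * yA u)
  have e3 := Finset.sum_fiberwise univ pu (fun u => lam u * rPico u * ynA u)
  have e4 : ∑ p, ∑ m ∈ Ip p, μ p m * N m
      = ∑ m, ∑ p ∈ univ.filter (fun p => m ∈ Ip p), μ p m * N m :=
    Finset.sum_comm' (by simp)
  unfold Lag
  simp only [sub_mul, mul_sub, mul_add, add_mul, Finset.sum_sub_distrib, Finset.sum_add_distrib,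
    Finset.mul_sum, Finset.sum_mul, ← mul_assoc] at *
  rw [← e1, ← e2, ← e3, e4]
  simp only [mul_comm (Nsf : ℝ)]
  ring

/-- Closed form of the dual function via greedy primal updates: if every `𝒰_m` and
every `𝒰_p` is nonempty and the multipliers are nonnegative with `λ_u > 0`, then the
dual function `D(λ,μ,β,α) = sup_{Π, R > 0} L` is finite and equals the explicit
expression obtained from the per-UE, per-macro and per-pico greedy maximizations. -/
theorem stmt_7 {U M P : Type*} [Fintype U] [Fintype M] [Fintype P]
    [DecidableEq M] [DecidableEq P]
    (mu : U → M) (pu : U → P) (rMac rPicoABS rPico w : U → ℝ)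
    (hrMac : ∀ u, 0 < rMac u) (hrPicoABS : ∀ u, 0 < rPicoABS u)
    (hrPico : ∀ u, 0 < rPico u) (hw : ∀ u, 0 < w u)
    (Ip : P → Finset M) (Nsf : ℕ) (hNsf : 0 < Nsf)
    (hUm : ∀ m : M, (univ.filter (fun u => mu u = m)).Nonempty)
    (hUp : ∀ p : P, (univ.filter (fun u => pu u = p)).Nonempty)
    (lam : U → ℝ) (μ : P → M → ℝ) (βM : M → ℝ) (βP αP : P → ℝ)
    (hlam : ∀ u, 0 < lam u) (hμ : ∀ p m, 0 ≤ μ p m)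
    (hβM : ∀ m, 0 ≤ βM m) (hβP : ∀ p, 0 ≤ βP p) (hαP : ∀ p, 0 ≤ αP p) :
    IsLUB
      {v : ℝ | ∃ x yA ynA A N, InPi mu pu Nsf x yA ynA A N ∧
        ∃ R : U → ℝ, (∀ u, 0 < R u) ∧
          v = Lag mu pu rMac rPicoABS rPico w Ip Nsf x yA ynA R A N lam μ βM βP αP}
      ((∑ u, (w u * Real.log (w u / lam u) - w u))
        + (∑ m, ((Nsf : ℝ) * max 0 (βM m - ∑ p ∈ univ.filter (fun p => m ∈ Ip p), μ p m)
            + (Nsf : ℝ) * max 0 ((univ.filter (fun u => mu u = m)).sup' (hUm m)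
                (fun u => lam u * rMac u - βM m))))
        + (∑ p, ((Nsf : ℝ) * max 0 (βP p - ∑ m ∈ Ip p, μ p m)
            + (Nsf : ℝ) * max 0 ((univ.filter (fun u => pu u = p)).sup' (hUp p)
                (fun u => lam u * rPicoABS u - βP p - αP p))
            + (Nsf : ℝ) * max 0 ((univ.filter (fun u => pu u = p)).sup' (hUp p)
                (fun u => lam u * rPico u - αP p))))
        + (Nsf : ℝ) * ((∑ p, ∑ m ∈ Ip p, μ p m) + ∑ p, αP p)) := by
  constructor
  · rintro v ⟨x, yA, ynA, A, N, ⟨hx, hyA, hynA, hA, hN, hA', hN', hxs, hyAs, hynAs⟩, R, hR, rfl⟩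
    rw [aux_Lag_eq]
    refine add_le_add (add_le_add (add_le_add ?_ ?_) ?_) le_rfl
    · exact Finset.sum_le_sum fun u _ => aux_log_le _ _ _ (hw u) (hlam u) (hR u)
    · exact Finset.sum_le_sum fun m _ => add_le_add (aux_box_le _ _ _ (hN m) (hN' m))
        (aux_greedy_le _ (hUm m) _ _ _ hx (hxs m))
    · exact Finset.sum_le_sum fun p _ => add_le_add (add_le_add
        (aux_box_le _ _ _ (hA p) (hA' p))
        (aux_greedy_le _ (hUp p) _ _ _ hyA (hyAs p)))
        (aux_greedy_le _ (hUp p) _ _ _ hynA (hynAs p))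
  · intro b hb
    have hn : (0 : ℝ) ≤ (Nsf : ℝ) := Nat.cast_nonneg _
    obtain ⟨x, hx, hxs, hxe⟩ := aux_greedy_eq mu hUm
      (fun m u => lam u * rMac u - βM m) (Nsf : ℝ) hn
    obtain ⟨yA, hyA, hyAs, hyAe⟩ := aux_greedy_eq pu hUp
      (fun p u => lam u * rPicoABS u - βP p - αP p) (Nsf : ℝ) hn
    obtain ⟨ynA, hynA, hynAs, hynAe⟩ := aux_greedy_eq pu hUp
      (fun p u => lam u * rPico u - αP p) (Nsf : ℝ) hn
    apply hb
    refine ⟨x, yA, ynA,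
      fun p => if 0 < βP p - ∑ m ∈ Ip p, μ p m then (Nsf : ℝ) else 0,
      fun m => if 0 < βM m - ∑ p ∈ univ.filter (fun p => m ∈ Ip p), μ p m then (Nsf : ℝ) else 0,
      ⟨hx, hyA, hynA, ?_, ?_, ?_, ?_, hxs, hyAs, hynAs⟩, fun u => w u / lam u,
      fun u => div_pos (hw u) (hlam u), ?_⟩
    · intro p; dsimp only; split_ifs <;> simp
    · intro m; dsimp only; split_ifs <;> simp
    · intro p; dsimp only; split_ifs <;> simp
    · intro m; dsimp only; split_ifs <;> simp
    · rw [aux_Lag_eq]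
      simp only [aux_box_eq, hxe, hyAe, hynAe]
      have h1 : ∀ u, lam u * (w u / lam u) = w u := fun u => by
        have := (hlam u).ne'
        field_simp
      simp only [h1]
end

section
/- Rounding preserves the interference constraint: let N_sf be an even positive integer and let a, b be real numbers with 0 ≤ a ≤ N_sf, 0 ≤ b ≤ N_sf, and a + b ≤ N_sf. Then Rnd_{N_sf}(a) + Rnd_{N_sf}(b) ≤ N_sf. -/
/-- The rounding function `Rnd_{N_sf}` : round down if `x ≥ N_sf / 2`, round up otherwise. -/
noncomputable def Rnd (Nsf : ℕ) (x : ℝ) : ℤ :=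
  if (Nsf : ℝ) / 2 ≤ x then ⌊x⌋ else ⌈x⌉

/-- Rounding preserves the interference constraint: for an even positive integer `N_sf`
and reals `0 ≤ a ≤ N_sf`, `0 ≤ b ≤ N_sf` with `a + b ≤ N_sf`, we have
`Rnd_{N_sf}(a) + Rnd_{N_sf}(b) ≤ N_sf`. -/
theorem stmt_8 (Nsf : ℕ) (hpos : 0 < Nsf) (heven : Even Nsf) (a b : ℝ)
    (ha0 : 0 ≤ a) (ha1 : a ≤ Nsf) (hb0 : 0 ≤ b) (hb1 : b ≤ Nsf)
    (hab : a + b ≤ Nsf) :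
    Rnd Nsf a + Rnd Nsf b ≤ (Nsf : ℤ) := by
  obtain ⟨k, hk⟩ := heven
  have hkR : (Nsf : ℝ) = k + k := by rw [hk]; push_cast; ring
  have hfa := Int.floor_le a
  have hfb := Int.floor_le b
  unfold Rnd
  split_ifs with h1 h2 h2
  · have h : ((⌊a⌋ + ⌊b⌋ : ℤ) : ℝ) ≤ ((Nsf : ℤ) : ℝ) := by
      push_cast; linarith
    exact_mod_cast h
  · have h : ⌈b⌉ ≤ (Nsf : ℤ) - ⌊a⌋ := by
      apply Int.ceil_le.mpr
      push_cast; linarith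
    linarith
  · have h : ⌈a⌉ ≤ (Nsf : ℤ) - ⌊b⌋ := by
      apply Int.ceil_le.mpr
      push_cast; linarith
    linarith
  · have h3 : ⌈a⌉ ≤ (k : ℤ) := by
      apply Int.ceil_le.mpr
      push_cast; linarith
    have h4 : ⌈b⌉ ≤ (k : ℤ) := by
      apply Int.ceil_le.mpr
      push_cast; linarith
    omega
end

section
/- Feasibility of the rounding algorithm (first assertion of Proposition 3): let N_sf be an even positive integer, and let (x̂, ŷ^A, ŷ^{nA}, Â, N̂, R̂) be nonnegative and satisfy the RELAXED-ABS constraints (T), (I), (X), (YA), (Y) together with Â_p ≤ N_sf and N̂_m ≤ N_sf for all p, m. Assume X_m > 0, Y_p^A > 0, Y_p^{nA} > 0 for all m, p in the Algorithm 2 construction. Then the Algorithm 2 output is feasible for OPT-ABS: (i) N_m* and A_p* are integers with 0 ≤ N_m* ≤ N_sf and 0 ≤ A_p* ≤ N_sf; (ii) A_p* + N_m* ≤ N_sf for every p and every m ∈ I_p; (iii) Σ_{u∈𝒰_m} x_u* ≤ N_m* for every m; (iv) Σ_{u∈𝒰_p} y_u^{A*} ≤ A_p* for every p; (v) Σ_{u∈𝒰_p}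 (y_u^{A*} + y_u^{nA*}) ≤ N_sf for every p; (vi) x_u* · (y_u^{A*} + y_u^{nA*}) = 0 for every u, and all of x*, y^{A*}, y^{nA*} are nonnegative. -/
open Finset

lemma rnd_bounds (N : ℕ) (x : ℝ) (h0 : 0 ≤ x) (h1 : x ≤ N) :
    0 ≤ Rnd N x ∧ Rnd N x ≤ (N : ℤ) := by
  unfold Rnd
  split_ifs
  · refine ⟨Int.floor_nonneg.2 h0, ?_⟩
    have h := (Int.floor_le x).trans h1
    exact_mod_cast h
  · exact ⟨Int.ceil_nonneg h0, Int.ceil_le.2 (by exact_mod_cast h1)⟩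

lemma floor_add_ceil_le (N : ℕ) (x y : ℝ) (h : x + y ≤ N) : ⌊x⌋ + ⌈y⌉ ≤ (N : ℤ) := by
  have h2 : ⌈y⌉ ≤ (N : ℤ) - ⌊x⌋ := by
    apply Int.ceil_le.2
    push_cast
    linarith [Int.floor_le x]
  linarith

lemma rnd_add_le (N : ℕ) (hE : Even N) (x y : ℝ) (h : x + y ≤ N) :
    Rnd N x + Rnd N y ≤ (N : ℤ) := by
  unfold Rnd
  split_ifs with h1 h2 h2
  · have := floor_add_ceil_le N x y h
    linarith [Int.floor_le_ceil y]
  · exact floor_add_ceil_le N x y h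
  · have := floor_add_ceil_le N y x (by linarith)
    linarith
  · obtain ⟨k, rfl⟩ := hE
    push_cast at h1 h2 ⊢
    have a : ⌈x⌉ ≤ (k : ℤ) := Int.ceil_le.2 (by push_cast; linarith)
    have b : ⌈y⌉ ≤ (k : ℤ) := Int.ceil_le.2 (by push_cast; linarith)
    linarith

lemma sum_rescale {U K : Type*} [Fintype U] [DecidableEq K] (f : U → K) (q : U → Prop)
    [DecidablePred q] (a z : U → ℝ) (c S : K → ℝ) (k : K)
    (hS : S k = ∑ u ∈ univ.filter (fun u => f u = k ∧ q u), a u) (hpos : 0 < S k)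
    (hz : ∀ u, z u = if q u then a u * c (f u) / S (f u) else 0) :
    ∑ u ∈ univ.filter (fun u => f u = k), z u = c k := by
  have h1 : ∑ u ∈ univ.filter (fun u => f u = k), z u
      = ∑ u ∈ univ.filter (fun u => f u = k ∧ q u), a u * (c k / S k) := by
    rw [← Finset.filter_filter, Finset.sum_filter (p := q)]
    refine Finset.sum_congr rfl fun u hu => ?_
    have hk : f u = k := by simpa using hu
    rw [hz, hk, mul_div_assoc]
  rw [h1, ← Finset.sum_mul, ← hS]
  field_simp

/-- Feasibility of the rounding algorithm (first assertion of Proposition 3): given an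
even positive `N_sf` and a nonnegative solution `(x̂, ŷᴬ, ŷⁿᴬ, Â, N̂, R̂)` of the
RELAXED-ABS constraints with `Â_p ≤ N_sf`, `N̂_m ≤ N_sf`, the output of Algorithm 2
(UE association by throughput comparison, rounding of `Â`, `N̂`, and rescaling of the
airtimes) is feasible for OPT-ABS. -/
theorem stmt_11 {U M P : Type*} [Fintype U] [Fintype M] [Fintype P]
    [DecidableEq M] [DecidableEq P]
    (mu : U → M) (pu : U → P) (rMac rPicoABS rPico : U → ℝ)
    (hrMac : ∀ u, 0 < rMac u) (hrPicoABS : ∀ u, 0 < rPicoABS u)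
    (hrPico : ∀ u, 0 < rPico u)
    (Ip : P → Finset M) (Nsf : ℕ) (hNsf : 0 < Nsf) (hEven : Even Nsf)
    (xh yAh ynAh Rh : U → ℝ) (Ah : P → ℝ) (Nh : M → ℝ)
    (hx : ∀ u, 0 ≤ xh u) (hyA : ∀ u, 0 ≤ yAh u) (hynA : ∀ u, 0 ≤ ynAh u)
    (hR : ∀ u, 0 ≤ Rh u) (hA : ∀ p, 0 ≤ Ah p) (hN : ∀ m, 0 ≤ Nh m)
    (hT : ∀ u, Rh u ≤ rMac u * xh u + rPicoABS u * yAh u + rPico u * ynAh u)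
    (hI : ∀ p, ∀ m ∈ Ip p, Ah p + Nh m ≤ (Nsf : ℝ))
    (hX : ∀ m, ∑ u ∈ univ.filter (fun u => mu u = m), xh u ≤ Nh m)
    (hYA : ∀ p, ∑ u ∈ univ.filter (fun u => pu u = p), yAh u ≤ Ah p)
    (hY : ∀ p, ∑ u ∈ univ.filter (fun u => pu u = p), (yAh u + ynAh u) ≤ (Nsf : ℝ))
    (hAub : ∀ p, Ah p ≤ (Nsf : ℝ)) (hNub : ∀ m, Nh m ≤ (Nsf : ℝ))
    -- Algorithm 2 construction
    (macroAssoc : U → Prop) [DecidablePred macroAssoc]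
    (hAssoc : ∀ u, macroAssoc u ↔
      rPicoABS u * yAh u + rPico u * ynAh u < rMac u * xh u)
    (Nstar : M → ℤ) (hNstar : ∀ m, Nstar m = Rnd Nsf (Nh m))
    (Astar : P → ℤ) (hAstar : ∀ p, Astar p = Rnd Nsf (Ah p))
    (Xm : M → ℝ)
    (hXm : ∀ m, Xm m = ∑ u ∈ univ.filter (fun u => mu u = m ∧ macroAssoc u), xh u)
    (YA : P → ℝ)
    (hYAdef : ∀ p, YA p = ∑ u ∈ univ.filter (fun u => pu u = p ∧ ¬ macroAssoc u), yAh u)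
    (YnA : P → ℝ)
    (hYnAdef : ∀ p, YnA p = ∑ u ∈ univ.filter (fun u => pu u = p ∧ ¬ macroAssoc u), ynAh u)
    (hXmpos : ∀ m, 0 < Xm m) (hYApos : ∀ p, 0 < YA p) (hYnApos : ∀ p, 0 < YnA p)
    (xstar yAstar ynAstar : U → ℝ)
    (hxstar : ∀ u, xstar u =
      if macroAssoc u then xh u * (Nstar (mu u) : ℝ) / Xm (mu u) else 0)
    (hyAstar : ∀ u, yAstar u =
      if macroAssoc u then 0 else yAh u * (Astar (pu u) : ℝ) / YA (pu u))
    (hynAstar : ∀ u, ynAstar u =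
      if macroAssoc u then 0
      else ynAh u * ((Nsf : ℝ) - (Astar (pu u) : ℝ)) / YnA (pu u)) :
    -- (i) integrality bounds
    (∀ m, 0 ≤ Nstar m ∧ Nstar m ≤ (Nsf : ℤ)) ∧
    (∀ p, 0 ≤ Astar p ∧ Astar p ≤ (Nsf : ℤ)) ∧
    -- (ii) interference constraints
    (∀ p, ∀ m ∈ Ip p, Astar p + Nstar m ≤ (Nsf : ℤ)) ∧
    -- (iii) macro airtime constraints
    (∀ m, ∑ u ∈ univ.filter (fun u => mu u = m), xstar u ≤ (Nstar m : ℝ)) ∧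
    -- (iv) pico ABS airtime constraints
    (∀ p, ∑ u ∈ univ.filter (fun u => pu u = p), yAstar u ≤ (Astar p : ℝ)) ∧
    -- (v) pico total airtime constraints
    (∀ p, ∑ u ∈ univ.filter (fun u => pu u = p), (yAstar u + ynAstar u) ≤ (Nsf : ℝ)) ∧
    -- (vi) association constraint and nonnegativity
    (∀ u, xstar u * (yAstar u + ynAstar u) = 0) ∧
    (∀ u, 0 ≤ xstar u ∧ 0 ≤ yAstar u ∧ 0 ≤ ynAstar u) := by
  have iN : ∀ m, 0 ≤ Nstar m ∧ Nstar m ≤ (Nsf : ℤ) := fun m => by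
    rw [hNstar]; exact rnd_bounds _ _ (hN m) (hNub m)
  have iA : ∀ p, 0 ≤ Astar p ∧ Astar p ≤ (Nsf : ℤ) := fun p => by
    rw [hAstar]; exact rnd_bounds _ _ (hA p) (hAub p)
  have sA : ∀ p, ∑ u ∈ univ.filter (fun u => pu u = p), yAstar u = (Astar p : ℝ) := fun p =>
    sum_rescale pu (fun u => ¬ macroAssoc u) yAh yAstar (fun p => (Astar p : ℝ)) YA p
      (hYAdef p) (hYApos p) (fun u => by rw [hyAstar, ite_not])
  have sn : ∀ p, ∑ u ∈ univ.filter (fun u => pu u = p), ynAstar u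
      = (Nsf : ℝ) - (Astar p : ℝ) := fun p =>
    sum_rescale pu (fun u => ¬ macroAssoc u) ynAh ynAstar
      (fun p => (Nsf : ℝ) - (Astar p : ℝ)) YnA p
      (hYnAdef p) (hYnApos p) (fun u => by rw [hynAstar, ite_not])
  refine ⟨iN, iA, ?_, ?_, fun p => (sA p).le, ?_, ?_, ?_⟩
  · intro p m hm
    rw [hAstar, hNstar]
    exact rnd_add_le _ hEven _ _ (hI p m hm)
  · intro m
    exact (sum_rescale mu macroAssoc xh xstar (fun m => (Nstar m : ℝ)) Xm m
      (hXm m) (hXmpos m) hxstar).le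
  · intro p
    rw [Finset.sum_add_distrib, sA, sn]
    linarith
  · intro u
    rw [hxstar, hyAstar, hynAstar]
    split_ifs <;> simp
  · intro u
    have h1 : (0 : ℝ) ≤ Nstar (mu u) := by exact_mod_cast (iN (mu u)).1
    have h2 : (0 : ℝ) ≤ Astar (pu u) := by exact_mod_cast (iA (pu u)).1
    have h3 : (0 : ℝ) ≤ (Nsf : ℝ) - Astar (pu u) := by
      rw [sub_nonneg]; exact_mod_cast (iA (pu u)).2
    rw [hxstar, hyAstar, hynAstar]
    split_ifs
    · exact ⟨div_nonneg (mul_nonneg (hx u) h1) (hXmpos _).le, le_rfl, le_rfl⟩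
    · exact ⟨le_rfl, div_nonneg (mul_nonneg (hyA u) h2) (hYApos _).le,
        div_nonneg (mul_nonneg (hynA u) h3) (hYnApos _).le⟩
end

section
/- Airtime preservation under rounding: in the setting of the Algorithm 2 construction, assume additionally N_sf ≥ 4. Then for every macro-associated UE u, the scaled airtime satisfies x_u* ≥ x̂_u / 2, and for every pico-associated UE u, the scaled ABS airtime satisfies y_u^{A*} ≥ ŷ_u^A / 2. -/
open Finset

lemma half_le_Rnd {Nsf : ℕ} (h4 : 4 ≤ Nsf) {x : ℝ} (hx : 0 ≤ x) :
    x / 2 ≤ (Rnd Nsf x : ℝ) := by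
  have h4' : (4 : ℝ) ≤ Nsf := by exact_mod_cast h4
  unfold Rnd
  split_ifs with h
  · have := Int.lt_floor_add_one x
    linarith
  · have := Int.le_ceil x
    linarith

/-- Airtime preservation under rounding: in the setting of the Algorithm 2 construction
with `N_sf ≥ 4` (and even), every macro-associated UE keeps at least half of its
relaxed airtime, `x* u ≥ x̂ u / 2`, and every pico-associated UE keeps at least half of
its relaxed ABS airtime, `yᴬ* u ≥ ŷᴬ u / 2`. -/
theorem stmt_12 {U M P : Type*} [Fintype U] [Fintype M] [Fintype P]
    [DecidableEq M] [DecidableEq P]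
    (mu : U → M) (pu : U → P) (rMac rPicoABS rPico : U → ℝ)
    (hrMac : ∀ u, 0 < rMac u) (hrPicoABS : ∀ u, 0 < rPicoABS u)
    (hrPico : ∀ u, 0 < rPico u)
    (Ip : P → Finset M) (Nsf : ℕ) (hNsf : 0 < Nsf) (hEven : Even Nsf)
    (hNsf4 : 4 ≤ Nsf)
    (xh yAh ynAh Rh : U → ℝ) (Ah : P → ℝ) (Nh : M → ℝ)
    (hx : ∀ u, 0 ≤ xh u) (hyA : ∀ u, 0 ≤ yAh u) (hynA : ∀ u, 0 ≤ ynAh u)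
    (hR : ∀ u, 0 ≤ Rh u) (hA : ∀ p, 0 ≤ Ah p) (hN : ∀ m, 0 ≤ Nh m)
    (hT : ∀ u, Rh u ≤ rMac u * xh u + rPicoABS u * yAh u + rPico u * ynAh u)
    (hI : ∀ p, ∀ m ∈ Ip p, Ah p + Nh m ≤ (Nsf : ℝ))
    (hX : ∀ m, ∑ u ∈ univ.filter (fun u => mu u = m), xh u ≤ Nh m)
    (hYA : ∀ p, ∑ u ∈ univ.filter (fun u => pu u = p), yAh u ≤ Ah p)
    (hY : ∀ p, ∑ u ∈ univ.filter (fun u => pu u = p), (yAh u + ynAh u) ≤ (Nsf : ℝ))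
    (hAub : ∀ p, Ah p ≤ (Nsf : ℝ)) (hNub : ∀ m, Nh m ≤ (Nsf : ℝ))
    -- Algorithm 2 construction
    (macroAssoc : U → Prop) [DecidablePred macroAssoc]
    (hAssoc : ∀ u, macroAssoc u ↔
      rPicoABS u * yAh u + rPico u * ynAh u < rMac u * xh u)
    (Nstar : M → ℤ) (hNstar : ∀ m, Nstar m = Rnd Nsf (Nh m))
    (Astar : P → ℤ) (hAstar : ∀ p, Astar p = Rnd Nsf (Ah p))
    (Xm : M → ℝ)
    (hXm : ∀ m, Xm m = ∑ u ∈ univ.filter (fun u => mu u = m ∧ macroAssoc u), xh u)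
    (YA : P → ℝ)
    (hYAdef : ∀ p, YA p = ∑ u ∈ univ.filter (fun u => pu u = p ∧ ¬ macroAssoc u), yAh u)
    (hXmpos : ∀ m, 0 < Xm m) (hYApos : ∀ p, 0 < YA p)
    (xstar yAstar : U → ℝ)
    (hxstar : ∀ u, xstar u =
      if macroAssoc u then xh u * (Nstar (mu u) : ℝ) / Xm (mu u) else 0)
    (hyAstar : ∀ u, yAstar u =
      if macroAssoc u then 0 else yAh u * (Astar (pu u) : ℝ) / YA (pu u)) :
    (∀ u, macroAssoc u → xh u / 2 ≤ xstar u) ∧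
    (∀ u, ¬ macroAssoc u → yAh u / 2 ≤ yAstar u) := by
  have hsum : ∀ (q : M), Xm q ≤ Nh q := by
    intro q
    rw [hXm]
    refine le_trans (Finset.sum_le_sum_of_subset_of_nonneg ?_ (fun u _ _ => hx u)) (hX q)
    intro u hu
    simp only [Finset.mem_filter, Finset.mem_univ, true_and] at hu ⊢
    exact hu.1
  have hsum2 : ∀ (q : P), YA q ≤ Ah q := by
    intro q
    rw [hYAdef]
    refine le_trans (Finset.sum_le_sum_of_subset_of_nonneg ?_ (fun u _ _ => hyA u)) (hYA q)
    intro u hu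
    simp only [Finset.mem_filter, Finset.mem_univ, true_and] at hu ⊢
    exact hu.1
  constructor
  · intro u hu
    rw [hxstar, if_pos hu, hNstar, le_div_iff₀ (hXmpos _)]
    have h1 := half_le_Rnd hNsf4 (hN (mu u))
    nlinarith [mul_nonneg (hx u) (sub_nonneg.2 (le_trans (div_le_div_of_nonneg_right (hsum (mu u)) zero_le_two) h1))]
  · intro u hu
    rw [hyAstar, if_neg hu, hAstar, le_div_iff₀ (hYApos _)]
    have h1 := half_le_Rnd hNsf4 (hA (pu u))
    nlinarith [mul_nonneg (hyA u) (sub_nonneg.2 (le_trans (div_le_div_of_nonneg_right (hsum2 (pu u)) zero_le_two) h1))]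
end
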